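/- arXiv:2110.04840 — 6 statements merged into one kernel-verified Lean document; each statement's English description precedes it below -/
import Mathlib

section
/- Let N be a positive integer, γ, T ∈ ℝ, G : ℝ → Matrix (Fin N) (Fin N) ℝ, and let a : ℝ → ℝ^{1×N} be twice differentiable with a''(t) − γ a'(t) = a(t)·G(t) for all t. Define b : ℝ → ℝ^{1×N} by b(τ) := a(T − τ). Then b is twice differentiable and satisfies b''(τ) + γ b'(τ) = b(τ)·G(T − τ) for all τ. In particular, the time-reversed adjoint of a heavy ball ODE is again a heavy ball ODE with the same damping parameter γ. -/
open Matrix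

/-- **Time reversal of the heavy ball adjoint equation.**
If `a : ℝ → ℝ^{1×N}` is twice differentiable with `a'' - γ a' = a·G`, then
`b(τ) := a(T - τ)` is twice differentiable and satisfies
`b'' + γ b' = b·G(T - ·)`, i.e. the time-reversed adjoint of a heavy ball ODE
is again a heavy ball ODE with the same damping `γ`. -/
theorem adjoint_hbnode_time_reversed (N : ℕ) (hN : 0 < N) (γ T : ℝ)
    (G : ℝ → Matrix (Fin N) (Fin N) ℝ)
    (a : ℝ → (Fin N → ℝ))
    (ha : Differentiable ℝ a) (ha' : Differentiable ℝ (deriv a))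
    (hode : ∀ t : ℝ, deriv (deriv a) t - γ • deriv a t = a t ᵥ* G t)
    (b : ℝ → (Fin N → ℝ)) (hb : b = fun τ => a (T - τ)) :
    Differentiable ℝ b ∧ Differentiable ℝ (deriv b) ∧
      (∀ τ : ℝ, deriv (deriv b) τ + γ • deriv b τ = b τ ᵥ* G (T - τ)) := by
  have h1 : deriv b = fun τ => -deriv a (T - τ) := by
    funext τ
    rw [hb]
    exact deriv_comp_const_sub a T τ
  have h2 : ∀ τ, deriv (deriv b) τ = deriv (deriv a) (T - τ) := by
    intro τ
    rw [h1, deriv.fun_neg, deriv_comp_const_sub (deriv a) T τ, neg_neg]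
  have hs : Differentiable ℝ (fun τ : ℝ => T - τ) := by fun_prop
  refine ⟨?_, ?_, ?_⟩
  · rw [hb]
    exact ha.comp hs
  · rw [h1]
    exact (ha'.comp hs).neg
  · intro τ
    rw [h2, h1, hb, ← hode (T - τ), smul_neg, ← sub_eq_add_neg]
end

section
/- Let N, p be positive integers, t₀ < T real numbers, and G : ℝ → Matrix (Fin N) (Fin N) ℝ, C : ℝ → Matrix (Fin N) (Fin p) ℝ be continuous on [t₀, T]. Suppose A : ℝ → Matrix (Fin N) (Fin N) ℝ and B : ℝ → Matrix (Fin N) (Fin p) ℝ are differentiable on [t₀, T] and satisfy A'(t) = −A(t)·G(t), B'(t) = C(t) + G(t)·B(t) on [t₀, T], with terminal condition A(T) = −1 (negative identity matrix). Then B(T) = −A(t₀)·B(t₀) + ∫_T^{t₀} A(t)·C(t) dt. -/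
open Matrix

attribute [local instance] Matrix.normedAddCommGroup Matrix.normedSpace

/-- **Integrated first-order adjoint sensitivity equation.**
With `A' = -A·G`, `B' = C + G·B` on `[t₀, T]` and terminal condition `A(T) = -1`,
one has `B(T) = -A(t₀)·B(t₀) + ∫_T^{t₀} A(t)·C(t) dt`. -/
theorem adjoint_sensitivity_integral_form (N p : ℕ) (hN : 0 < N) (hp : 0 < p)
    (t₀ T : ℝ) (ht : t₀ < T)
    (G : ℝ → Matrix (Fin N) (Fin N) ℝ) (C : ℝ → Matrix (Fin N) (Fin p) ℝ)
    (hG : ContinuousOn G (Set.Icc t₀ T)) (hC : ContinuousOn C (Set.Icc t₀ T))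
    (A : ℝ → Matrix (Fin N) (Fin N) ℝ) (B : ℝ → Matrix (Fin N) (Fin p) ℝ)
    (hA : ∀ t ∈ Set.Icc t₀ T, HasDerivWithinAt A (-(A t) * G t) (Set.Icc t₀ T) t)
    (hB : ∀ t ∈ Set.Icc t₀ T, HasDerivWithinAt B (C t + G t * B t) (Set.Icc t₀ T) t)
    (hAT : A T = -1) :
    B T = -(A t₀) * B t₀ + ∫ t in T..t₀, A t * C t := by
  have hcA : ContinuousOn A (Set.Icc t₀ T) := fun t h => (hA t h).continuousWithinAt
  have hcB : ContinuousOn B (Set.Icc t₀ T) := fun t h => (hB t h).continuousWithinAt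
  have hprod : ContinuousOn (fun t => A t * B t) (Set.Icc t₀ T) :=
    continuousOn_iff_continuous_restrict.2
      ((continuousOn_iff_continuous_restrict.1 hcA).matrix_mul
        (continuousOn_iff_continuous_restrict.1 hcB))
  have hAC : ContinuousOn (fun t => A t * C t) (Set.Icc t₀ T) :=
    continuousOn_iff_continuous_restrict.2
      ((continuousOn_iff_continuous_restrict.1 hcA).matrix_mul
        (continuousOn_iff_continuous_restrict.1 hC))
  have hd : ∀ t ∈ Set.Ioo t₀ T, HasDerivAt (fun t => A t * B t) (A t * C t) t := by
    intro t h
    have hn : Set.Icc t₀ T ∈ nhds t := Icc_mem_nhds h.1 h.2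
    have h1 := (hA t ⟨h.1.le, h.2.le⟩).hasDerivAt hn
    have h2 := (hB t ⟨h.1.le, h.2.le⟩).hasDerivAt hn
    have e : A t * C t = (-(A t) * G t) * B t + A t * (C t + G t * B t) := by
      rw [Matrix.mul_add, ← Matrix.mul_assoc, Matrix.neg_mul, Matrix.neg_mul]; abel
    rw [e]
    refine hasDerivAt_pi.2 fun i => hasDerivAt_pi.2 fun j => ?_
    have := HasDerivAt.fun_sum (u := Finset.univ) (fun k (_ : k ∈ Finset.univ) =>
      (hasDerivAt_pi.1 (hasDerivAt_pi.1 h1 i) k).mul (hasDerivAt_pi.1 (hasDerivAt_pi.1 h2 k) j))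
    rw [Finset.sum_add_distrib] at this
    exact this
  have : CompleteSpace (Matrix (Fin N) (Fin p) ℝ) := FiniteDimensional.complete ℝ _
  have hI := intervalIntegral.integral_eq_sub_of_hasDerivAt_of_le ht.le hprod hd
    (hAC.intervalIntegrable_of_Icc ht.le)
  rw [intervalIntegral.integral_symm, hI, hAT, Matrix.neg_mul, Matrix.neg_mul, Matrix.one_mul]
  abel
end

section
/- Let N be a positive integer, t₀ < T real numbers, and f : ℝ^N × ℝ → ℝ^N continuously differentiable. Suppose h : ℝ^N × [t₀,T] → ℝ^N is continuously differentiable in (u,t), satisfies ∂h/∂t(u,t) = f(h(u,t),t) and h(u,t₀) = u for all u in an open neighborhood of a point u₀. Let A : [t₀,T] → Matrix (Fin N) (Fin N) ℝ be differentiable with A'(t) = −A(t)·J(t), where J(t) := (∂f/∂h)(h(u₀,t),t), and terminal condition A(T) = −1 (negative identity). Then the derivative of the time-T solution map u ↦ h(u,T) at u₀ equals −A(t₀). -/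
open Matrix

attribute [local instance] Matrix.normedAddCommGroup Matrix.normedSpace

open Topology

/-- **The adjoint equation computes the derivative of the solution map.**
Let `h(u, t)` be a `C¹` family of solutions of `h' = f(h, t)` with `h(u, t₀) = u` for `u`
in an open neighborhood `V` of `u₀`, let `J(t)` be the Jacobian of `f` in its first
argument along the solution through `u₀`, and let `A' = -A·J` on `[t₀, T]` with
`A(T) = -1`. Then the derivative of the time-`T` solution map `u ↦ h(u, T)` at `u₀`
is (multiplication by) the matrix `-A(t₀)`. -/
theorem solution_map_derivative_eq_adjoint (N : ℕ) (hN : 0 < N) (t₀ T : ℝ) (ht : t₀ < T)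
    (f : (Fin N → ℝ) → ℝ → (Fin N → ℝ))
    (hf : ContDiff ℝ 1 (fun p : (Fin N → ℝ) × ℝ => f p.1 p.2))
    (h : (Fin N → ℝ) → ℝ → (Fin N → ℝ)) (u₀ : Fin N → ℝ)
    (V : Set (Fin N → ℝ)) (hV : IsOpen V) (hu₀ : u₀ ∈ V)
    (hreg : ContDiffOn ℝ 1 (fun p : (Fin N → ℝ) × ℝ => h p.1 p.2) (V ×ˢ Set.Icc t₀ T))
    (hode : ∀ u ∈ V, ∀ t ∈ Set.Icc t₀ T,
      HasDerivWithinAt (h u) (f (h u t) t) (Set.Icc t₀ T) t)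
    (hinit : ∀ u ∈ V, h u t₀ = u)
    (J : ℝ → Matrix (Fin N) (Fin N) ℝ)
    (hJ : ∀ t : ℝ, J t =
      LinearMap.toMatrix' ((fderiv ℝ (fun u => f u t) (h u₀ t) :
        (Fin N → ℝ) →L[ℝ] (Fin N → ℝ)) : (Fin N → ℝ) →ₗ[ℝ] (Fin N → ℝ)))
    (A : ℝ → Matrix (Fin N) (Fin N) ℝ)
    (hA : ∀ t ∈ Set.Icc t₀ T, HasDerivWithinAt A (-(A t) * J t) (Set.Icc t₀ T) t)
    (hAT : A T = -1) :
    HasFDerivAt (fun u => h u T)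
      (LinearMap.toContinuousLinearMap (Matrix.mulVecLin (-(A t₀)))) u₀ := by
  classical
  set F : (Fin N → ℝ) × ℝ → (Fin N → ℝ) := fun p => f p.1 p.2 with hF
  set H : (Fin N → ℝ) × ℝ → (Fin N → ℝ) := fun p => h p.1 p.2 with hH
  -- a ball
  obtain ⟨r, hr, hrV⟩ := Metric.isOpen_iff.1 hV u₀ hu₀
  have hconv : Convex ℝ (Metric.ball u₀ r ×ˢ Set.Icc t₀ T) :=
    (convex_ball u₀ r).prod (convex_Icc t₀ T)
  have hregB : ContDiffOn ℝ 1 H (Metric.ball u₀ r ×ˢ Set.Icc t₀ T) :=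
    hreg.mono (Set.prod_mono hrV le_rfl)
  have hballn : Metric.ball u₀ r ∈ 𝓝 u₀ := Metric.ball_mem_nhds u₀ hr
  have hnw : ∀ t, 𝓝[Metric.ball u₀ r ×ˢ Set.Icc t₀ T] (u₀, t) = 𝓝 u₀ ×ˢ 𝓝[Set.Icc t₀ T] t := by
    intro t
    rw [nhdsWithin_prod_eq, nhdsWithin_eq_nhds.2 hballn]
  -- Lipschitz
  have hLip : ∃ C : ℝ, 0 ≤ C ∧ ∀ᶠ u in 𝓝 u₀, ∀ t ∈ Set.Icc t₀ T,
      ‖h u t - h u₀ t‖ ≤ C * ‖u - u₀‖ := by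
    refine IsCompact.induction_on (p := fun s => ∃ C : ℝ, 0 ≤ C ∧ ∀ᶠ u in 𝓝 u₀, ∀ t ∈ s,
      ‖h u t - h u₀ t‖ ≤ C * ‖u - u₀‖) (isCompact_Icc (a := t₀) (b := T)) ?_ ?_ ?_ ?_
    · exact ⟨0, le_rfl, by simp⟩
    · rintro s s' hss ⟨C, hC, hh⟩
      exact ⟨C, hC, hh.mono fun u hu t hts => hu t (hss hts)⟩
    · rintro s s' ⟨C, hC, hh⟩ ⟨C', hC', hh'⟩
      refine ⟨C + C', by positivity, ?_⟩
      filter_upwards [hh, hh'] with u hu hu'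
      have := norm_nonneg (u - u₀)
      rintro t (hts | hts)
      · have := hu t hts
        nlinarith
      · have := hu' t hts
        nlinarith
    · intro t hts
      obtain ⟨K, s, hs, hK⟩ := (hregB (u₀, t) ⟨Metric.mem_ball_self hr, hts⟩).exists_lipschitzOnWith hconv
      rw [hnw] at hs
      obtain ⟨a, ha, b, hb, hab⟩ := Filter.mem_prod_iff.1 hs
      refine ⟨b, hb, K, K.2, ?_⟩
      filter_upwards [ha] with u hu x hx
      have := hK.norm_sub_le (hab ⟨hu, hx⟩ : (u, x) ∈ s)
        (hab ⟨mem_of_mem_nhds ha, hx⟩ : (u₀, x) ∈ s)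
      simpa [Prod.norm_def, hH] using this
  -- Taylor
  have hTay : ∀ ε : ℝ, 0 < ε → ∀ᶠ u in 𝓝 u₀, ∀ t ∈ Set.Icc t₀ T,
      ‖f (h u t) t - f (h u₀ t) t - fderiv ℝ (fun u => f u t) (h u₀ t) (h u t - h u₀ t)‖
        ≤ ε * ‖h u t - h u₀ t‖ := by
    intro ε hε
    refine IsCompact.induction_on (p := fun s => ∀ᶠ u in 𝓝 u₀, ∀ t ∈ s,
      ‖f (h u t) t - f (h u₀ t) t - fderiv ℝ (fun u => f u t) (h u₀ t) (h u t - h u₀ t)‖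
        ≤ ε * ‖h u t - h u₀ t‖) (isCompact_Icc (a := t₀) (b := T)) ?_ ?_ ?_ ?_
    · simp
    · rintro s s' hss hh
      exact hh.mono fun u hu t hts => hu t (hss hts)
    · rintro s s' hh hh'
      filter_upwards [hh, hh'] with u hu hu'
      rintro t (hts | hts)
      · exact hu t hts
      · exact hu' t hts
    · intro t hts
      have hstr : HasStrictFDerivAt F (fderiv ℝ F (h u₀ t, t)) (h u₀ t, t) :=
        hf.contDiffAt.hasStrictFDerivAt one_ne_zero
      have h1 := hstr.isLittleO.def (half_pos hε)
      rw [nhds_prod_eq] at h1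
      obtain ⟨W, hW, W', hW', hWW⟩ := Filter.mem_prod_iff.1 h1
      have hcd : Continuous (fderiv ℝ F) := hf.continuous_fderiv one_ne_zero
      have h2 : ∀ᶠ p in 𝓝 (h u₀ t, t), dist (fderiv ℝ F p) (fderiv ℝ F (h u₀ t, t)) < ε / 2 :=
        Metric.tendsto_nhds.1 (hcd.tendsto _) _ (half_pos hε)
      have hct : Filter.Tendsto (fun p : (Fin N → ℝ) × ℝ => (H p, p.2))
          (𝓝 u₀ ×ˢ 𝓝[Set.Icc t₀ T] t) (𝓝 (h u₀ t, t)) := by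
        rw [← hnw]
        have : ContinuousWithinAt (fun p : (Fin N → ℝ) × ℝ => (H p, p.2))
          (Metric.ball u₀ r ×ˢ Set.Icc t₀ T) (u₀, t) :=
          (hregB.continuousOn (u₀, t) ⟨Metric.mem_ball_self hr, hts⟩).prodMk
            continuous_snd.continuousWithinAt
        exact this
      have h3 := hct (Filter.inter_mem (Filter.inter_mem hW hW') h2)
      obtain ⟨a, ha, b, hb, hab⟩ := Filter.mem_prod_iff.1 h3
      refine ⟨b, hb, ?_⟩
      filter_upwards [ha] with u hu x hx
      have hx1 := hab (show (u, x) ∈ a ×ˢ b from ⟨hu, hx⟩)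
      have hx0 := hab (show (u₀, x) ∈ a ×ˢ b from ⟨mem_of_mem_nhds ha, hx⟩)
      have e1 : ‖F (h u x, x) - F (h u₀ x, x) - fderiv ℝ F (h u₀ t, t) ((h u x, x) - (h u₀ x, x))‖
          ≤ ε / 2 * ‖((h u x, x) : (Fin N → ℝ) × ℝ) - (h u₀ x, x)‖ :=
        hWW (show ((h u x, x), (h u₀ x, x)) ∈ W ×ˢ W' from ⟨hx1.1.1, hx0.1.2⟩)
      have e2 : dist (fderiv ℝ F (h u₀ x, x)) (fderiv ℝ F (h u₀ t, t)) < ε / 2 := hx0.2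
      rw [dist_eq_norm] at e2
      have e3 : fderiv ℝ (fun u => f u x) (h u₀ x) =
          (fderiv ℝ F (h u₀ x, x)).comp (ContinuousLinearMap.inl ℝ (Fin N → ℝ) ℝ) := by
        have hd : HasFDerivAt F (fderiv ℝ F (h u₀ x, x)) (h u₀ x, x) :=
          (hf.differentiable one_ne_zero _).hasFDerivAt
        have hl : HasFDerivAt (fun e : Fin N → ℝ => (e, x))
            (ContinuousLinearMap.inl ℝ (Fin N → ℝ) ℝ) (h u₀ x) :=
          hasFDerivAt_prodMk_left (h u₀ x) x
        have hcmp := HasFDerivAt.comp (g := F) (f := fun e : Fin N → ℝ => (e, x)) (h u₀ x) hd hl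
        exact hcmp.fderiv
      rw [e3]
      have e4 : ((h u x, x) : (Fin N → ℝ) × ℝ) - (h u₀ x, x) = (h u x - h u₀ x, 0) := by simp
      rw [e4] at e1
      have e5 : ‖((h u x - h u₀ x, 0) : (Fin N → ℝ) × ℝ)‖ = ‖h u x - h u₀ x‖ := by
        simp [Prod.norm_def]
      have e6 := (fderiv ℝ F (h u₀ x, x) - fderiv ℝ F (h u₀ t, t)).le_opNorm
        (h u x - h u₀ x, 0)
      rw [e5] at e1 e6
      have e7 := mul_le_mul_of_nonneg_right e2.le (norm_nonneg (h u x - h u₀ x))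
      calc _ = ‖(F (h u x, x) - F (h u₀ x, x) - fderiv ℝ F (h u₀ t, t) (h u x - h u₀ x, 0))
            - (fderiv ℝ F (h u₀ x, x) - fderiv ℝ F (h u₀ t, t)) (h u x - h u₀ x, 0)‖ := by
              congr 1
              simp [hF]
        _ ≤ _ := norm_sub_le _ _
        _ ≤ ε * ‖h u x - h u₀ x‖ := by linarith
  -- matrices as continuous linear maps
  let Φ : Matrix (Fin N) (Fin N) ℝ →L[ℝ] ((Fin N → ℝ) →L[ℝ] (Fin N → ℝ)) :=
    LinearMap.toContinuousLinearMap
      ((LinearMap.toContinuousLinearMap (𝕜 := ℝ) (E := Fin N → ℝ) (F' := Fin N → ℝ)).toLinearMap ∘ₗ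
        (Matrix.toLin' (R := ℝ) (m := Fin N) (n := Fin N)).toLinearMap)
  have hΦ : ∀ M v, Φ M v = M *ᵥ v := fun M v => rfl
  have hB : ∀ t ∈ Set.Icc t₀ T, HasDerivWithinAt (fun t => Φ (A t)) (Φ (-(A t) * J t))
      (Set.Icc t₀ T) t := fun t hts => Φ.hasFDerivAt.comp_hasDerivWithinAt t (hA t hts)
  have hJv : ∀ t v, J t *ᵥ v = fderiv ℝ (fun u => f u t) (h u₀ t) v := by
    intro t v
    rw [hJ, LinearMap.toMatrix'_mulVec]
    rfl
  obtain ⟨M, hM⟩ := (isCompact_Icc (a := t₀) (b := T)).exists_bound_of_continuousOn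
    (f := fun t => Φ (A t)) (fun t hts => (hB t hts).continuousWithinAt)
  have hM0 : 0 ≤ M := (norm_nonneg _).trans (hM t₀ ⟨le_rfl, ht.le⟩)
  obtain ⟨C, hC, hCb⟩ := hLip
  have hT0 : 0 < T - t₀ := sub_pos.2 ht
  refine HasFDerivAt.of_isLittleO (Asymptotics.IsLittleO.of_bound fun c hc => ?_)
  set D := (M + 1) * (C + 1) * (T - t₀) with hD
  have hDp : 0 < D := by positivity
  filter_upwards [hCb, hTay (c / D) (by positivity), hV.mem_nhds hu₀] with u hu1 hu2 huV
  have hg : ∀ t ∈ Set.Icc t₀ T, HasDerivWithinAt (fun t => Φ (A t) (h u t - h u₀ t))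
      (Φ (A t) (f (h u t) t - f (h u₀ t) t
        - fderiv ℝ (fun u => f u t) (h u₀ t) (h u t - h u₀ t))) (Set.Icc t₀ T) t := by
    intro t hts
    have := (hB t hts).clm_apply ((hode u huV t hts).sub (hode u₀ hu₀ t hts))
    refine HasDerivWithinAt.congr_deriv this ?_
    rw [← hJv]
    simp only [hΦ, Pi.sub_apply, ← Matrix.mulVec_mulVec, Matrix.neg_mulVec, Matrix.mulVec_sub]
    abel
  have hbd : ∀ t ∈ Set.Icc t₀ T, ‖Φ (A t) (f (h u t) t - f (h u₀ t) t
        - fderiv ℝ (fun u => f u t) (h u₀ t) (h u t - h u₀ t))‖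
        ≤ (M + 1) * ((c / D) * ((C + 1) * ‖u - u₀‖)) := by
    intro t hts
    refine (ContinuousLinearMap.le_opNorm _ _).trans ?_
    have := hM t hts
    have h5 := hu1 t hts
    have h6 := norm_nonneg (u - u₀)
    gcongr
    · linarith
    · refine (hu2 t hts).trans ?_
      gcongr
      linarith
  have hmv := (convex_Icc t₀ T).norm_image_sub_le_of_norm_hasDerivWithin_le hg hbd
    (Set.left_mem_Icc.2 ht.le) (Set.right_mem_Icc.2 ht.le)
  have hfin : (M + 1) * ((c / D) * ((C + 1) * ‖u - u₀‖)) * ‖T - t₀‖ = c * ‖u - u₀‖ := by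
    rw [Real.norm_of_nonneg hT0.le]
    have : c = c / D * D := by field_simp
    conv_rhs => rw [this]
    rw [hD]; ring
  rw [hfin] at hmv
  refine le_trans (le_of_eq ?_) hmv
  rw [← norm_neg]
  congr 1
  simp only [hΦ, hAT, hinit u huV, hinit u₀ hu₀, Matrix.neg_mulVec, Matrix.one_mulVec,
    LinearMap.coe_toContinuousLinearMap', Matrix.mulVecLin_apply]
  abel
end

section
/- Let N be a positive integer, t₀ < T real numbers, and f : ℝ^N × ℝ → ℝ^N continuously differentiable. Suppose h : ℝ^N × [t₀,T] → ℝ^N is continuously differentiable in (u,t), satisfies ∂h/∂t(u,t) = f(h(u,t),t) and h(u,t₀) = u for all u in an open neighborhood of a point u₀. Let J(t) := (∂f/∂h)(h(u₀,t),t) and assume J(s)·J(t) = J(t)·J(s) for all s, t ∈ [t₀,T]. Then the derivative of the time-T solution map u ↦ h(u,T) at u₀ equals the matrix exponential exp( ∫_{t₀}^{T} J(τ) dτ ). -/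
open Set Filter Topology MeasureTheory in
theorem aux_ode_exp {𝔸 : Type*} [NormedRing 𝔸] [NormedAlgebra ℝ 𝔸] [CompleteSpace 𝔸]
    (K D : ℝ → 𝔸) (hK : Continuous K) (hD : Continuous D)
    (hc : ∀ s t, Commute (K s) (K t)) (a b : ℝ) (hab : a ≤ b)
    (hint : ∀ t ∈ Icc a b, D t = 1 + ∫ τ in a..t, K τ * D τ) :
    D b = NormedSpace.exp (∫ τ in a..b, K τ) := by
  let : NormedAlgebra ℚ 𝔸 := NormedAlgebra.restrictScalars ℚ ℝ 𝔸
  have hci : ∀ (x : 𝔸) (c d : ℝ), (∀ t, Commute x (K t)) → Commute x (∫ τ in c..d, K τ) := by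
    intro x c d hx
    have h1 := (ContinuousLinearMap.mul ℝ 𝔸 x).intervalIntegral_comp_comm
      (hK.intervalIntegrable (μ := volume) c d)
    have h2 := ((ContinuousLinearMap.mul ℝ 𝔸).flip x).intervalIntegral_comp_comm
      (hK.intervalIntegrable (μ := volume) c d)
    simp only [ContinuousLinearMap.mul_apply', ContinuousLinearMap.flip_apply] at h1 h2
    unfold Commute SemiconjBy
    rw [← h1, ← h2]
    exact intervalIntegral.integral_congr (fun t _ => hx t)
  set A : ℝ → 𝔸 := fun t => ∫ τ in a..t, K τ with hA
  have hAd : ∀ t, HasDerivAt A (K t) t := fun t =>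
    (hK.integral_hasStrictDerivAt a t).hasDerivAt
  have hKA : ∀ s t, Commute (K s) (A t) := fun s t => hci _ _ _ (hc s)
  have hAA : ∀ s t, Commute (A s) (A t) := fun s t => hci _ _ _ (fun r => (hKA r s).symm)
  have hE : ∀ t, HasDerivAt (fun s => NormedSpace.exp (-A s)) (NormedSpace.exp (-A t) * (-K t)) t := by
    intro t
    have h1 : HasDerivAt (fun s => -A s - -A t) (-K t) t := (hAd t).neg.sub_const _
    have h0 : HasFDerivAt (NormedSpace.exp : 𝔸 → 𝔸) (1 : 𝔸 →L[ℝ] 𝔸) (-A t - -A t) := by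
      rw [sub_self]; exact hasFDerivAt_exp_zero
    have h2 := (h0.comp_hasDerivAt t h1).const_mul (NormedSpace.exp (-A t))
    refine (h2.congr_of_eventuallyEq (Eventually.of_forall fun s => ?_))
    simp only [Function.comp]
    rw [← NormedSpace.exp_add_of_commute]
    · congr 1; abel
    · exact ((hAA t s).neg_left.neg_right).sub_right (Commute.refl _)
  set D' : ℝ → 𝔸 := fun t => 1 + ∫ τ in a..t, K τ * D τ with hD'
  have hDd : ∀ t, HasDerivAt D' (K t * D t) t := fun t =>
    (((hK.mul hD).integral_hasStrictDerivAt a t).hasDerivAt).const_add 1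
  have hz : ∀ t, HasDerivAt (fun s => NormedSpace.exp (-A s) * D' s)
      (NormedSpace.exp (-A t) * (-K t) * D' t + NormedSpace.exp (-A t) * (K t * D t)) t :=
    fun t => (hE t).mul (hDd t)
  have hconst := constant_of_has_deriv_right_zero (a := a) (b := b)
    (f := fun s => NormedSpace.exp (-A s) * D' s)
    (fun t _ => (hz t).continuousAt.continuousWithinAt) (fun t ht => by
      have := (hz t).hasDerivWithinAt (s := Ici t)
      convert this using 1
      rw [hint t ⟨ht.1, ht.2.le⟩]
      simp only [hD']
      noncomm_ring) b ⟨hab, le_rfl⟩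
  simp only [hA, hD', intervalIntegral.integral_same, neg_zero, NormedSpace.exp_zero, add_zero,
    mul_one] at hconst
  rw [← hint b ⟨hab, le_rfl⟩] at hconst
  have h3 := congrArg (fun x => NormedSpace.exp (A b) * x) hconst
  simp only [← mul_assoc] at h3
  rw [← NormedSpace.exp_add_of_commute (Commute.refl _).neg_right] at h3
  simpa using h3

open Set Filter Topology MeasureTheory in
theorem aux_flow {E : Type*} [NormedAddCommGroup E] [NormedSpace ℝ E] [FiniteDimensional ℝ E]
    (t₀ T : ℝ) (ht : t₀ < T)
    (f : E → ℝ → E)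
    (hf : ContDiff ℝ 1 (fun p : E × ℝ => f p.1 p.2))
    (h : E → ℝ → E) (u₀ : E)
    (V : Set E) (hV : IsOpen V) (hu₀ : u₀ ∈ V)
    (hreg : ContDiffOn ℝ 1 (fun p : E × ℝ => h p.1 p.2) (V ×ˢ Set.Icc t₀ T))
    (hode : ∀ u ∈ V, ∀ t ∈ Set.Icc t₀ T,
      HasDerivWithinAt (h u) (f (h u t) t) (Set.Icc t₀ T) t)
    (hinit : ∀ u ∈ V, h u t₀ = u)
    (K : ℝ → E →L[ℝ] E) (hK : ∀ t, K t = fderiv ℝ (fun u => f u t) (h u₀ t))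
    (hcomm : ∀ s ∈ Set.Icc t₀ T, ∀ t ∈ Set.Icc t₀ T, K s * K t = K t * K s) :
    IntervalIntegrable K volume t₀ T ∧
    HasFDerivAt (fun u => h u T) (NormedSpace.exp (∫ τ in t₀..T, K τ)) u₀ := by
  have : CompleteSpace E := FiniteDimensional.complete ℝ E
  have : ProperSpace E := FiniteDimensional.proper ℝ E
  set S : Set (E × ℝ) := V ×ˢ Icc t₀ T with hS
  set G := fderivWithin ℝ (fun p : E × ℝ => h p.1 p.2) S with hG
  have hUD : UniqueDiffOn ℝ S := hV.uniqueDiffOn.prod (uniqueDiffOn_Icc ht)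
  have hGc : ContinuousOn G S := hreg.continuousOn_fderivWithin hUD le_rfl
  set DD : E × ℝ → E →L[ℝ] E := fun p => (G p).comp (ContinuousLinearMap.inl ℝ E ℝ) with hDD
  have hDDc : ContinuousOn DD S := hGc.clm_comp continuousOn_const
  have hDDd : ∀ u ∈ V, ∀ t ∈ Icc t₀ T, HasFDerivAt (fun u => h u t) (DD (u, t)) u := by
    intro u hu t htt
    have h1 : HasFDerivWithinAt (fun p : E × ℝ => h p.1 p.2) (G (u, t)) S (u, t) :=
      (hreg.differentiableOn one_ne_zero (u, t) ⟨hu, htt⟩).hasFDerivWithinAt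
    have h2 : HasFDerivWithinAt (fun u : E => (u, t)) (ContinuousLinearMap.inl ℝ E ℝ) V u :=
      (hasFDerivAt_prodMk_left u t).hasFDerivWithinAt
    exact (HasFDerivWithinAt.comp (t := S) u h1 h2 (fun x hx => ⟨hx, htt⟩)).hasFDerivAt (hV.mem_nhds hu)
  -- derivative of f
  set FF : E × ℝ → E →L[ℝ] E := fun p =>
    (fderiv ℝ (fun p : E × ℝ => f p.1 p.2) p).comp (ContinuousLinearMap.inl ℝ E ℝ) with hFF
  have hFFc : Continuous FF := (hf.continuous_fderiv one_ne_zero).clm_comp continuous_const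
  have hFFd : ∀ x t, HasFDerivAt (fun u => f u t) (FF (x, t)) x := by
    intro x t
    have h1 := ((hf.differentiable one_ne_zero) (x, t)).hasFDerivAt
    have h2 : HasFDerivAt (fun u : E => (u, t)) (ContinuousLinearMap.inl ℝ E ℝ) x :=
      hasFDerivAt_prodMk_left x t
    exact HasFDerivAt.comp x h1 h2
  have hKF : ∀ t, K t = FF (h u₀ t, t) := fun t => by rw [hK, (hFFd _ t).fderiv]
  have hhc : ContinuousOn (fun p : E × ℝ => h p.1 p.2) S := hreg.continuousOn
  have hsec : ∀ u ∈ V, ContinuousOn (fun t : ℝ => (u, t)) (Icc t₀ T) := fun u _ => by fun_prop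
  have hhu : ∀ u ∈ V, ContinuousOn (h u) (Icc t₀ T) := fun u hu =>
    hhc.comp (hsec u hu) (fun t htt => ⟨hu, htt⟩)
  have hKc : ContinuousOn K (Icc t₀ T) := by
    have : ContinuousOn (fun t => FF (h u₀ t, t)) (Icc t₀ T) :=
      hFFc.comp_continuousOn ((hhu u₀ hu₀).prodMk continuousOn_id)
    exact this.congr (fun t _ => hKF t)
  have hDc : ContinuousOn (fun t => DD (u₀, t)) (Icc t₀ T) :=
    hDDc.comp (hsec u₀ hu₀) (fun t htt => ⟨hu₀, htt⟩)
  -- joint derivative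
  set P : E × ℝ → E →L[ℝ] E := fun p => (FF (h p.1 p.2, p.2)).comp (DD p) with hP
  have hPc : ContinuousOn P S :=
    (hFFc.comp_continuousOn (hhc.prodMk continuous_snd.continuousOn)).clm_comp hDDc
  obtain ⟨r, hr, hrV⟩ := Metric.nhds_basis_closedBall.mem_iff.1 (hV.mem_nhds hu₀)
  have hcpt : IsCompact (Metric.closedBall u₀ r ×ˢ Icc t₀ T) :=
    (isCompact_closedBall u₀ r).prod isCompact_Icc
  obtain ⟨C, hC⟩ := hcpt.exists_bound_of_continuousOn (hPc.mono (prod_mono hrV Subset.rfl))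
  have hfu : ∀ u ∈ V, ContinuousOn (fun t => f (h u t) t) (Icc t₀ T) := fun u hu =>
    hf.continuous.comp_continuousOn ((hhu u hu).prodMk continuousOn_id)
  have hIE : ∀ u ∈ V, ∀ t ∈ Icc t₀ T, h u t = u + ∫ τ in t₀..t, f (h u τ) τ := by
    intro u hu t htt
    have hsub : Icc t₀ t ⊆ Icc t₀ T := Icc_subset_Icc le_rfl htt.2
    rw [intervalIntegral.integral_eq_sub_of_hasDeriv_right_of_le htt.1 ((hhu u hu).mono hsub)
      (f' := fun τ => f (h u τ) τ), hinit u hu]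
    · abel
    · intro x hx
      exact ((hode u hu x ⟨hx.1.le, hx.2.le.trans htt.2⟩).hasDerivAt
        (Icc_mem_nhds hx.1 (hx.2.trans_le htt.2))).hasDerivWithinAt
    · exact ((hfu u hu).mono hsub).intervalIntegrable_of_Icc htt.1
  have hDI : ∀ t ∈ Icc t₀ T, DD (u₀, t) = 1 + ∫ τ in t₀..t, K τ * DD (u₀, τ) := by
    intro t htt
    have hsub : uIoc t₀ t ⊆ Icc t₀ T := by
      rw [uIoc_of_le htt.1]
      exact fun x hx => ⟨hx.1.le, hx.2.trans htt.2⟩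
    have hI := intervalIntegral.hasFDerivAt_integral_of_dominated_of_fderiv_le
      (μ := volume) (a := t₀) (b := t) (𝕜 := ℝ)
      (F := fun u τ => f (h u τ) τ) (F' := fun u τ => P (u, τ)) (x₀ := u₀)
      (bound := fun _ => C) (s := Metric.closedBall u₀ r)
      (Metric.closedBall_mem_nhds u₀ hr)
      (by
        filter_upwards [hV.mem_nhds hu₀] with u hu
        exact ((hfu u hu).mono hsub).aestronglyMeasurable measurableSet_uIoc)
      (((hfu u₀ hu₀).mono (Icc_subset_Icc le_rfl htt.2)).intervalIntegrable_of_Icc htt.1)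
      (((hPc.comp (hsec u₀ hu₀) (fun t htt => ⟨hu₀, htt⟩)).mono hsub).aestronglyMeasurable
        measurableSet_uIoc)
      (Eventually.of_forall fun τ hτ u hu => hC (u, τ) ⟨hu, hsub hτ⟩)
      intervalIntegrable_const
      (Eventually.of_forall fun τ hτ u hu =>
        HasFDerivAt.comp (g := fun x => f x τ) u (hFFd (h u τ) τ) (hDDd u (hrV hu) τ (hsub hτ)))
    have hI2 := (hasFDerivAt_id (𝕜 := ℝ) u₀).add hI
    have hI3 : HasFDerivAt (fun u => h u t) _ u₀ := hI2.congr_of_eventuallyEq (by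
      filter_upwards [hV.mem_nhds hu₀] with u hu
      simpa using hIE u hu t htt)
    rw [(hDDd u₀ hu₀ t htt).unique hI3]
    simp only [hP, hKF]
    rfl
  refine ⟨hKc.intervalIntegrable_of_Icc ht.le, ?_⟩
  set K' := IccExtend ht.le ((Icc t₀ T).domRestrict K) with hK'
  set D' := IccExtend ht.le ((Icc t₀ T).domRestrict (fun t => DD (u₀, t))) with hD'
  have eK : ∀ t ∈ Icc t₀ T, K' t = K t := fun t htt => by
    rw [hK', IccExtend_of_mem _ _ htt]; rfl
  have eD : ∀ t ∈ Icc t₀ T, D' t = DD (u₀, t) := fun t htt => by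
    rw [hD', IccExtend_of_mem _ _ htt]; rfl
  have key := aux_ode_exp K' D' (hKc.domRestrict.Icc_extend') (hDc.domRestrict.Icc_extend')
    (fun s t => hcomm _ (projIcc t₀ T ht.le s).2 _ (projIcc t₀ T ht.le t).2) t₀ T ht.le (by
      intro t htt
      rw [eD t htt, hDI t htt]
      congr 1
      refine intervalIntegral.integral_congr (fun τ hτ => ?_)
      rw [uIcc_of_le htt.1] at hτ
      have : τ ∈ Icc t₀ T := ⟨hτ.1, hτ.2.trans htt.2⟩
      simp only [eK τ this, eD τ this])
  have hTm : T ∈ Icc t₀ T := ⟨ht.le, le_rfl⟩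
  have e2 : ∫ τ in t₀..T, K' τ = ∫ τ in t₀..T, K τ :=
    intervalIntegral.integral_congr (fun τ hτ => by
      rw [uIcc_of_le ht.le] at hτ
      exact eK τ hτ)
  rw [eD T hTm, e2] at key
  rw [← key]
  exact hDDd u₀ hu₀ T hTm

section
attribute [local instance] Matrix.linftyOpNormedRing Matrix.linftyOpNormedAlgebra

theorem aux_exp_matrix (N : ℕ) (L : (Fin N → ℝ) →L[ℝ] (Fin N → ℝ)) :
    LinearMap.toContinuousLinearMap (Matrix.mulVecLin
      (NormedSpace.exp (LinearMap.toMatrix' (L : (Fin N → ℝ) →ₗ[ℝ] (Fin N → ℝ))))) =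
    NormedSpace.exp L := by
  let : NormedAlgebra ℚ ((Fin N → ℝ) →L[ℝ] (Fin N → ℝ)) := NormedAlgebra.restrictScalars ℚ ℝ _
  let φ : ((Fin N → ℝ) →L[ℝ] (Fin N → ℝ)) →ₐ[ℝ] Matrix (Fin N) (Fin N) ℝ :=
    ((Module.End.toContinuousLinearMap (𝕜 := ℝ) (Fin N → ℝ)).symm.trans
      LinearMap.toMatrixAlgEquiv').toAlgHom
  have hφ : Continuous φ := φ.toLinearMap.continuous_of_finiteDimensional
  have h1 : φ (NormedSpace.exp L) = NormedSpace.exp (φ L) := NormedSpace.map_exp φ hφ L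
  have h2 : NormedSpace.exp (LinearMap.toMatrix' (L : (Fin N → ℝ) →ₗ[ℝ] (Fin N → ℝ)))
      = LinearMap.toMatrix' ((NormedSpace.exp L : (Fin N → ℝ) →L[ℝ] (Fin N → ℝ)) :
          (Fin N → ℝ) →ₗ[ℝ] (Fin N → ℝ)) := h1.symm
  rw [h2, ← Matrix.toLin'_apply', Matrix.toLin'_toMatrix']
  rfl
end

open Matrix

attribute [local instance] Matrix.normedAddCommGroup Matrix.normedSpace

/-- **Closed-form exponential expression for the derivative of the solution map.**
Let `h(u, t)` be a `C¹` family of solutions of `h' = f(h, t)` with `h(u, t₀) = u` for `u`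
in an open neighborhood `V` of `u₀`, and let `J(t)` be the Jacobian of `f` in its first
argument along the solution through `u₀`. If the matrices `J(t)`, `t ∈ [t₀, T]`, pairwise
commute, then the derivative of the time-`T` solution map `u ↦ h(u, T)` at `u₀` equals
(multiplication by) `exp(∫_{t₀}^T J(τ) dτ)` (entrywise integral, matrix exponential). -/
theorem solution_map_derivative_eq_exp (N : ℕ) (hN : 0 < N) (t₀ T : ℝ) (ht : t₀ < T)
    (f : (Fin N → ℝ) → ℝ → (Fin N → ℝ))
    (hf : ContDiff ℝ 1 (fun p : (Fin N → ℝ) × ℝ => f p.1 p.2))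
    (h : (Fin N → ℝ) → ℝ → (Fin N → ℝ)) (u₀ : Fin N → ℝ)
    (V : Set (Fin N → ℝ)) (hV : IsOpen V) (hu₀ : u₀ ∈ V)
    (hreg : ContDiffOn ℝ 1 (fun p : (Fin N → ℝ) × ℝ => h p.1 p.2) (V ×ˢ Set.Icc t₀ T))
    (hode : ∀ u ∈ V, ∀ t ∈ Set.Icc t₀ T,
      HasDerivWithinAt (h u) (f (h u t) t) (Set.Icc t₀ T) t)
    (hinit : ∀ u ∈ V, h u t₀ = u)
    (J : ℝ → Matrix (Fin N) (Fin N) ℝ)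
    (hJ : ∀ t : ℝ, J t =
      LinearMap.toMatrix' ((fderiv ℝ (fun u => f u t) (h u₀ t) :
        (Fin N → ℝ) →L[ℝ] (Fin N → ℝ)) : (Fin N → ℝ) →ₗ[ℝ] (Fin N → ℝ)))
    (hcomm : ∀ s ∈ Set.Icc t₀ T, ∀ t ∈ Set.Icc t₀ T, J s * J t = J t * J s) :
    HasFDerivAt (fun u => h u T)
      (LinearMap.toContinuousLinearMap
        (Matrix.mulVecLin
          (NormedSpace.exp (Matrix.of fun i j => ∫ τ in t₀..T, J τ i j)))) u₀ := by
  have hK : ∀ t, J t = LinearMap.toMatrix' ((fderiv ℝ (fun u => f u t) (h u₀ t) :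
        (Fin N → ℝ) →L[ℝ] (Fin N → ℝ)) : (Fin N → ℝ) →ₗ[ℝ] (Fin N → ℝ)) := hJ
  obtain ⟨hi, hd⟩ := aux_flow t₀ T ht f hf h u₀ V hV hu₀ hreg hode hinit
    (fun t => fderiv ℝ (fun u => f u t) (h u₀ t)) (fun t => rfl) (by
      intro s hs t htt
      have := hcomm s hs t htt
      rw [hJ s, hJ t, ← LinearMap.toMatrix'_mul, ← LinearMap.toMatrix'_mul] at this
      have h2 := LinearMap.toMatrix'.injective this
      ext1 x
      exact LinearMap.congr_fun h2 x)
  have hM : (Matrix.of fun i j => ∫ τ in t₀..T, J τ i j) =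
      LinearMap.toMatrix' ((∫ τ in t₀..T, fderiv ℝ (fun u => f u τ) (h u₀ τ) :
        (Fin N → ℝ) →L[ℝ] (Fin N → ℝ)) : (Fin N → ℝ) →ₗ[ℝ] (Fin N → ℝ)) := by
    ext i j
    have := ((ContinuousLinearMap.proj (R := ℝ) (φ := fun _ : Fin N => ℝ) i).comp
      (ContinuousLinearMap.apply ℝ (Fin N → ℝ)
        (Pi.single j 1 : Fin N → ℝ))).intervalIntegral_comp_comm hi
    simp only [Matrix.of_apply, hJ, LinearMap.toMatrix'_apply]
    simpa [Pi.single_apply, ← Pi.single_apply] using this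
  rw [hM]
  have := aux_exp_matrix N (∫ τ in t₀..T, fderiv ℝ (fun u => f u τ) (h u₀ τ))
  rw [← this] at hd
  exact hd
end

section
/- Let R be a commutative ring, n a positive integer, J, F ∈ Matrix (Fin n) (Fin n) R, and δ ∈ R. Let H := fromBlocks(0, J, F, δ•1) ∈ Matrix (Fin n ⊕ Fin n) (Fin n ⊕ Fin n) R. Then for every λ ∈ R, det( λ•1 − H ) = det( (λ·(λ − δ))•1 − J·F ), where the identity matrices on the left and right are of sizes 2n and n respectively. -/
open Matrix

theorem hb_aux {S : Type*} [CommRing S] {n : ℕ} (B C : Matrix (Fin n) (Fin n) S) (a d : S) :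
    (Matrix.fromBlocks (a • 1) B C (d • 1)).det * d ^ n
      = ((a * d) • (1 : Matrix (Fin n) (Fin n) S) - B * C).det * d ^ n := by
  have h : Matrix.fromBlocks (a • 1) B C (d • 1) *
      Matrix.fromBlocks (d • (1 : Matrix (Fin n) (Fin n) S)) 0 (-C) 1
      = Matrix.fromBlocks ((a * d) • (1 : Matrix (Fin n) (Fin n) S) - B * C) B 0 (d • 1) := by
    rw [Matrix.fromBlocks_multiply]
    congr 1 <;> simp [smul_smul, sub_eq_add_neg, mul_comm]
  have h2 := congrArg Matrix.det h
  rw [Matrix.det_mul, Matrix.det_fromBlocks_zero₁₂, Matrix.det_fromBlocks_zero₂₁] at h2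
  simpa [Matrix.det_smul] using h2

theorem hb_aux2 {S : Type*} [CommRing S] {n : ℕ} (B C : Matrix (Fin n) (Fin n) S) (a d : S) :
    (Matrix.fromBlocks (a • 1) B C (d • 1)).det
      = ((a * d) • (1 : Matrix (Fin n) (Fin n) S) - B * C).det := by
  have h := hb_aux (B.map Polynomial.C) (C.map Polynomial.C) (Polynomial.C a)
    (Polynomial.X : Polynomial S)
  have h1 := ((Polynomial.monic_X_pow n).isRegular).right h
  have h2 := congrArg (Polynomial.evalRingHom d) h1
  rw [RingHom.map_det, RingHom.map_det] at h2
  convert h2 using 2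
  · ext i j
    rcases i with i | i <;> rcases j with j | j <;>
      simp [Matrix.one_apply] <;> split_ifs <;> simp
  · ext i j
    simp [Matrix.one_apply, Matrix.mul_apply, apply_ite, Polynomial.eval_finsetSum]

/-- **Characteristic determinant identity for the (G)HBNODE block matrix.**
For `H = fromBlocks(0, J, F, δ•1)` over a commutative ring,
`det(λ•1 - H) = det((λ(λ - δ))•1 - J·F)`. -/
theorem hbnode_block_char_det (R : Type*) [CommRing R] (n : ℕ) (hn : 0 < n)
    (J F : Matrix (Fin n) (Fin n) R) (δ : R)
    (H : Matrix (Fin n ⊕ Fin n) (Fin n ⊕ Fin n) R)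
    (hH : H = Matrix.fromBlocks 0 J F (δ • (1 : Matrix (Fin n) (Fin n) R))) :
    ∀ l : R,
      (l • (1 : Matrix (Fin n ⊕ Fin n) (Fin n ⊕ Fin n) R) - H).det =
        ((l * (l - δ)) • (1 : Matrix (Fin n) (Fin n) R) - J * F).det := by
  intro l
  have h := hb_aux2 (-J) (-F) l (l - δ)
  rw [neg_mul_neg] at h
  rw [← h, hH]
  congr 1
  rw [← Matrix.fromBlocks_one, Matrix.fromBlocks_smul, sub_eq_add_neg, Matrix.fromBlocks_neg,
    Matrix.fromBlocks_add]
  congr 1 <;> simp [add_smul, sub_eq_add_neg]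
end

section
/- Let n be a positive integer, J, F ∈ Matrix (Fin n) (Fin n) ℂ, δ ∈ ℂ, and H := fromBlocks(0, J, F, δ•1) ∈ Matrix (Fin n ⊕ Fin n) (Fin n ⊕ Fin n) ℂ. Then there exist μ₁, …, μₙ ∈ ℂ (the eigenvalues of J·F with multiplicity) such that the characteristic polynomial of H equals ∏_{i=1}^{n} (X² − δ·X − μᵢ). Consequently, the 2n eigenvalues of H counted with multiplicity can be partitioned into n pairs such that the sum of each pair equals δ. -/
open Matrix Polynomial

lemma aux_multiset (n : ℕ) (s : Multiset ℂ) (h : s.card = n) :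
    ∃ f : Fin n → ℂ, ∀ g : ℂ → ℂ[X], (s.map g).prod = ∏ i, g (f i) := by
  induction s using Quotient.inductionOn with
  | h l =>
    have h' : l.length = n := by simpa using h
    subst h'
    refine ⟨fun i => l.get i, fun g => ?_⟩
    simp [Multiset.quot_mk_to_coe, ← List.prod_ofFn]

lemma aux_det (n : ℕ) (J F : Matrix (Fin n) (Fin n) ℂ) (δ t : ℂ) (ht : t ≠ δ) :
    (Matrix.fromBlocks 0 J F (δ • (1 : Matrix (Fin n) (Fin n) ℂ))).charpoly.eval t
      = (J * F).charpoly.eval (t ^ 2 - δ * t) := by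
  have hd : (t - δ) ^ n ≠ 0 := pow_ne_zero _ (sub_ne_zero.2 ht)
  apply mul_right_cancel₀ hd
  rw [Matrix.eval_charpoly, Matrix.eval_charpoly]
  have e1 : (Matrix.fromBlocks ((t - δ) • (1 : Matrix (Fin n) (Fin n) ℂ)) 0 F 1).det
      = (t - δ) ^ n := by
    rw [det_fromBlocks_zero₁₂]; simp
  have e2 : (Matrix.fromBlocks (scalar (Fin n) (t ^ 2 - δ * t) - J * F) (-J) 0
      ((t - δ) • (1 : Matrix (Fin n) (Fin n) ℂ))).det
      = (scalar (Fin n) (t ^ 2 - δ * t) - J * F).det * (t - δ) ^ n := by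
    rw [det_fromBlocks_zero₂₁]; simp
  rw [← e2, ← e1, ← det_mul]
  congr 1
  have e3 : scalar (Fin n ⊕ Fin n) t - Matrix.fromBlocks 0 J F (δ • 1)
      = Matrix.fromBlocks (t • (1 : Matrix (Fin n) (Fin n) ℂ)) (-J) (-F) ((t - δ) • 1) := by
    ext (i | i) (j | j) <;> simp [Matrix.scalar_apply, Matrix.diagonal_apply, Matrix.one_apply] <;>
      split_ifs <;> simp
  have e4 : scalar (Fin n) (t ^ 2 - δ * t) = (t * (t - δ)) • (1 : Matrix (Fin n) (Fin n) ℂ) := by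
    rw [scalar_apply, ← Matrix.smul_one_eq_diagonal]; congr 1; ring
  rw [e3, e4, fromBlocks_multiply]
  congr 1 <;> simp [smul_smul, sub_eq_add_neg, mul_comm]

/-- **Eigenvalue pairing for the (G)HBNODE block matrix.**
For `H = fromBlocks(0, J, F, δ•1)` over `ℂ`, there are `μ₁, …, μₙ` (the eigenvalues of
`J·F` with multiplicity) such that `charpoly H = ∏ᵢ (X² - δX - μᵢ)`; consequently the
`2n` eigenvalues of `H` (with multiplicity) can be partitioned into `n` pairs, each pair
summing to `δ`. -/
theorem hbnode_block_eigenvalue_pairing (n : ℕ) (hn : 0 < n)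
    (J F : Matrix (Fin n) (Fin n) ℂ) (δ : ℂ)
    (H : Matrix (Fin n ⊕ Fin n) (Fin n ⊕ Fin n) ℂ)
    (hH : H = Matrix.fromBlocks 0 J F (δ • (1 : Matrix (Fin n) (Fin n) ℂ))) :
    (∃ μ : Fin n → ℂ,
      (J * F).charpoly = ∏ i, (X - C (μ i)) ∧
      H.charpoly = ∏ i, (X ^ 2 - C δ * X - C (μ i))) ∧
    (∃ ν : Fin n → ℂ × ℂ, (∀ i, (ν i).1 + (ν i).2 = δ) ∧
      H.charpoly = ∏ i, ((X - C (ν i).1) * (X - C (ν i).2))) := by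
  subst hH
  have hs : (J * F).charpoly.Splits := IsAlgClosed.splits _
  have hc : (J * F).charpoly.roots.card = n := by
    rw [← hs.natDegree_eq_card_roots]; simp
  obtain ⟨μ, hμ⟩ := aux_multiset n _ hc
  have h1 : (J * F).charpoly = ∏ i, (X - C (μ i)) := by
    rw [← hμ (fun a => X - C a)]
    exact hs.eq_prod_roots_of_monic (Matrix.charpoly_monic _)
  have h2 : (Matrix.fromBlocks 0 J F (δ • (1 : Matrix (Fin n) (Fin n) ℂ))).charpoly
      = ∏ i, (X ^ 2 - C δ * X - C (μ i)) := by
    apply Polynomial.eq_of_infinite_eval_eq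
    refine Set.Infinite.mono (s := {δ}ᶜ) ?_ (Set.finite_singleton δ).infinite_compl
    intro t ht
    simp only [Set.mem_setOf_eq]
    rw [aux_det n J F δ t ht, h1]
    simp [eval_prod]
  refine ⟨⟨μ, h1, h2⟩, ?_⟩
  have hw : ∀ i, ∃ w : ℂ, w ^ 2 = δ ^ 2 + 4 * μ i := fun i =>
    IsAlgClosed.exists_pow_nat_eq _ (by norm_num)
  choose w hw using hw
  refine ⟨fun i => ((δ + w i) / 2, (δ - w i) / 2), fun i => by ring, ?_⟩
  rw [h2]
  refine Finset.prod_congr rfl fun i _ => ?_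
  have a : C δ = C ((δ + w i) / 2) + C ((δ - w i) / 2) := by
    rw [← C_add]; congr 1; ring
  have b : C (μ i) = - (C ((δ + w i) / 2) * C ((δ - w i) / 2)) := by
    rw [← C_mul, ← C_neg]; congr 1; linear_combination (-1/4) * hw i
  rw [a, b]; ring
end
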